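/- The linear growth bound for the MG symbol is sharp: for every N > 0 and every integer j ≥ 1, the frequency k = (j², j, 1) satisfies M̂_3(k) ≥ (N² / (√3 (3N⁴ + 1))) · √(j⁴ + j² + 1) = (N² / (√3 (3N⁴ + 1))) · |k|. In particular M̂_3 is unbounded on ℤ³. -/

import Mathlib

/-- `|k|²` for `k = (k1,k2,k3) ∈ ℤ³`, as a real number. -/
noncomputable def kSq (k1 k2 k3 : ℤ) : ℝ := (k1 : ℝ) ^ 2 + (k2 : ℝ) ^ 2 + (k3 : ℝ) ^ 2

/-- The denominator `D(k) = N⁴|k|²k3² + k2⁴` of the MG symbols. -/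
noncomputable def Dmg (N : ℝ) (k1 k2 k3 : ℤ) : ℝ :=
  N ^ 4 * kSq k1 k2 k3 * (k3 : ℝ) ^ 2 + (k2 : ℝ) ^ 4

/-- The first magnetogeostrophic symbol `M̂₁(k)`. -/
noncomputable def Mhat1 (N : ℝ) (k1 k2 k3 : ℤ) : ℝ :=
  if k3 = 0 then 0 else
    (N ^ 4 * (k2 : ℝ) * (k3 : ℝ) * kSq k1 k2 k3
      - N ^ 2 * (k1 : ℝ) * (k2 : ℝ) ^ 2 * (k3 : ℝ)) / Dmg N k1 k2 k3

/-- The second magnetogeostrophic symbol `M̂₂(k)`. -/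
noncomputable def Mhat2 (N : ℝ) (k1 k2 k3 : ℤ) : ℝ :=
  if k3 = 0 then 0 else
    (-N ^ 4 * (k1 : ℝ) * (k3 : ℝ) * kSq k1 k2 k3
      - N ^ 2 * (k2 : ℝ) ^ 3 * (k3 : ℝ)) / Dmg N k1 k2 k3

/-- The third magnetogeostrophic symbol `M̂₃(k)`. -/
noncomputable def Mhat3 (N : ℝ) (k1 k2 k3 : ℤ) : ℝ :=
  if k3 = 0 then 0 else
    (N ^ 2 * (k1 : ℝ) ^ 2 * (k2 : ℝ) ^ 2 + N ^ 2 * (k2 : ℝ) ^ 4) / Dmg N k1 k2 k3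


/-- **Sharpness of the linear growth bound:** for every `N > 0` and every integer `j ≥ 1`,
the frequency `k = (j², j, 1)` satisfies
`M̂₃(k) ≥ (N²/(√3 (3N⁴ + 1))) · √(j⁴ + j² + 1) = (N²/(√3 (3N⁴ + 1))) · |k|`.
In particular `M̂₃` is unbounded on `ℤ³`. -/
theorem mg_symbol3_linear_growth_sharp (N : ℝ) (hN : 0 < N) (j : ℤ) (hj : 1 ≤ j) :
    N ^ 2 / (Real.sqrt 3 * (3 * N ^ 4 + 1))
        * Real.sqrt ((j : ℝ) ^ 4 + (j : ℝ) ^ 2 + 1)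
      ≤ Mhat3 N (j ^ 2) j 1 := by
  have hx : (1 : ℝ) ≤ (j : ℝ) := by exact_mod_cast hj
  simp only [Mhat3, Dmg, kSq, one_ne_zero, if_false]
  push_cast
  generalize (j : ℝ) = x at hx
  have h2 : 1 ≤ x ^ 2 := one_le_pow₀ hx
  have h4 : x ^ 2 ≤ x ^ 4 := by nlinarith
  have hS : x ^ 4 + x ^ 2 + 1 ≤ 3 * x ^ 4 := by linarith
  have h3 : 0 < Real.sqrt 3 := by positivity
  have hsq : Real.sqrt (x ^ 4 + x ^ 2 + 1) ≤ Real.sqrt 3 * x ^ 2 := by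
    calc Real.sqrt (x ^ 4 + x ^ 2 + 1) ≤ Real.sqrt (3 * (x ^ 2) ^ 2) :=
          Real.sqrt_le_sqrt (by linarith [show (x ^ 2) ^ 2 = x ^ 4 by ring])
      _ = Real.sqrt 3 * x ^ 2 := by
          rw [Real.sqrt_mul (by norm_num), Real.sqrt_sq (by positivity)]
  have hN4 : 0 < N ^ 4 := by positivity
  calc N ^ 2 / (Real.sqrt 3 * (3 * N ^ 4 + 1)) * Real.sqrt (x ^ 4 + x ^ 2 + 1)
      ≤ N ^ 2 / (Real.sqrt 3 * (3 * N ^ 4 + 1)) * (Real.sqrt 3 * x ^ 2) := by gcongr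
    _ = N ^ 2 * x ^ 2 / (3 * N ^ 4 + 1) := by field_simp
    _ ≤ _ := by
      have hx0 : 0 < x := by linarith
      rw [div_le_div_iff₀ (by positivity) (by positivity)]
      have e1 : N ^ 4 * (x ^ 4 + x ^ 2 + 1) ≤ N ^ 4 * (3 * x ^ 4) := by gcongr
      have e2 : N ^ 2 * x ^ 2 * (N ^ 4 * (x ^ 4 + x ^ 2 + 1) + x ^ 4)
          ≤ N ^ 2 * x ^ 2 * (N ^ 4 * (3 * x ^ 4) + x ^ 4) := by gcongr
      have e3 : 0 ≤ N ^ 2 * x ^ 4 * (3 * N ^ 4 + 1) := by positivity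
      nlinarith [e2, e3]
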